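/- If p > 3 is a prime and G is a finite p-group that is a Q-group, then G is a product of two cyclic subgroups with trivial intersection. -/

import Mathlib

/-!
Let `G` be a noncyclic Q-group of order a power of `p > 3`. Since `p` is odd, `G` has a normal
subgroup `E` of order `p ^ 2` and exponent `p`, and the Q-condition for `m = p` forces
`E = {x | x ^ p = 1}`. An element satisfies `x ^ m = 1` modulo `E` exactly when `x ^ (m * p) = 1`
in `G`, so `G ⧸ E` is again a Q-group, and by induction it is the product of two cyclic subgroups
meeting trivially.

As `E` lies in the second centre and `p` divides both `p.choose 2` and `p.choose 3`, the `p`-th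
power map is multiplicative on any `x`, `y` commuting modulo `E`. Hence two elements of order
dividing `p` in `G ⧸ E` whose lifts have the same `p`-th power coincide, and lifts `a`, `b` to `G`
of generators of the two cyclic factors still generate subgroups meeting trivially. Lifting
multiplies each of the two orders by `p`, which accounts for all of `Nat.card E = p ^ 2`.
-/

section Collection

variable {M : Type*} [Monoid M] {x y d e f : M}

theorem pow_mul_of_mul_eq (h : d * y = y * d * f) (hdf : Commute d f) (n : ℕ) :
    d ^ n * y = y * d ^ n * f ^ n := by
  rw [mul_assoc, ← hdf.mul_pow]
  exact (SemiconjBy.pow_right (show SemiconjBy y (d * f) d by rw [SemiconjBy, h, mul_assoc])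
    n).eq.symm

theorem pow_mul_mul_of_mul_eq (hx : d * x = x * d * e) (hy : d * y = y * d * f)
    (hde : Commute d e) (hey : Commute e y) (hdf : Commute d f) (n : ℕ) :
    d ^ n * (x * y) = x * y * d ^ n * f ^ n * e ^ n := by
  calc d ^ n * (x * y) = x * (d ^ n * (e ^ n * y)) := by
        rw [← mul_assoc, pow_mul_of_mul_eq hx hde]; simp only [mul_assoc]
    _ = x * (d ^ n * y) * e ^ n := by rw [(hey.pow_left n).eq]; simp only [mul_assoc]
    _ = x * y * d ^ n * f ^ n * e ^ n := by
        rw [pow_mul_of_mul_eq hy hdf]; simp only [mul_assoc]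

theorem mul_pow_of_commute_of_commute (hd : y * x = x * y * d) (hdx : Commute d x)
    (hdy : Commute d y) (n : ℕ) : (x * y) ^ n = x ^ n * y ^ n * d ^ n.choose 2 := by
  induction n with
  | zero => simp
  | succ n ih =>
    have hyxy : y ^ n * (x * y) = x * y ^ (n + 1) * d ^ n := by
      rw [← mul_assoc, pow_mul_of_mul_eq hd hdy.symm, mul_assoc, (hdy.pow_left n).eq, pow_succ]
      simp only [mul_assoc]
    calc (x * y) ^ (n + 1) = x ^ n * y ^ n * (d ^ n.choose 2 * (x * y)) := by
          rw [pow_succ, ih, mul_assoc]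
      _ = x ^ n * (y ^ n * (x * y)) * d ^ n.choose 2 := by
          rw [((hdx.mul_right hdy).pow_left _).eq]; simp only [mul_assoc]
      _ = x ^ (n + 1) * y ^ (n + 1) * d ^ (n + n.choose 2) := by
          rw [hyxy, pow_succ x, pow_add d]; simp only [mul_assoc]
      _ = x ^ (n + 1) * y ^ (n + 1) * d ^ (n + 1).choose 2 := by
          rw [Nat.choose_succ_succ' n 1, Nat.choose_one_right]

theorem pow_mul_mul_self_of_mul_eq (hx : y * x = x * y * d) (hdy : d * y = y * d * f)
    (hdf : Commute d f) (hfy : Commute f y) (n : ℕ) :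
    y ^ n * (x * y) = x * y ^ (n + 1) * d ^ n * f ^ (n + n.choose 2) := by
  have hyx : y ^ n * x = x * (y * d) ^ n :=
    (SemiconjBy.pow_right (show SemiconjBy x (y * d) y by rw [SemiconjBy, hx, mul_assoc])
      n).eq.symm
  calc y ^ n * (x * y) = x * (y ^ n * d ^ n * f ^ n.choose 2) * y := by
        rw [← mul_assoc, hyx, mul_pow_of_commute_of_commute hdy hfy hdf.symm]
    _ = x * y ^ n * (d ^ n * y) * f ^ n.choose 2 := by
        simp only [mul_assoc, (hfy.pow_left _).eq]
    _ = x * y ^ (n + 1) * d ^ n * f ^ (n + n.choose 2) := by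
        rw [pow_mul_of_mul_eq hdy hdf, pow_succ, pow_add]; simp only [mul_assoc]

theorem mul_pow_of_forall_commute (hd : y * x = x * y * d) (hdx : d * x = x * d * e)
    (hdy : d * y = y * d * f) (he : ∀ g, Commute e g) (hf : ∀ g, Commute f g) (n : ℕ) :
    (x * y) ^ n = x ^ n * y ^ n * d ^ n.choose 2 * e ^ n.choose 3 *
      f ^ (n.choose 2 + 2 * n.choose 3) := by
  have he' (k : ℕ) (g : M) : Commute (e ^ k) g := (he g).pow_left k
  have hf' (k : ℕ) (g : M) : Commute (f ^ k) g := (hf g).pow_left k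
  induction n with
  | zero => simp
  | succ n ih =>
    calc (x * y) ^ (n + 1)
        = x ^ n * y ^ n * (d ^ n.choose 2 * (x * y)) * e ^ n.choose 3 *
            f ^ (n.choose 2 + 2 * n.choose 3) := by
          rw [pow_succ, ih]
          simp only [mul_assoc, (hf' _ (x * y)).eq, (he' _ x).left_comm, (he' _ y).left_comm]
      _ = x ^ n * (y ^ n * (x * y)) * d ^ n.choose 2 * (e ^ n.choose 2 * e ^ n.choose 3) *
            (f ^ n.choose 2 * f ^ (n.choose 2 + 2 * n.choose 3)) := by
          rw [pow_mul_mul_of_mul_eq hdx hdy (he d).symm (he y) (hf d).symm]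
          simp only [mul_assoc, (hf' _ (e ^ _)).left_comm]
      _ = x ^ (n + 1) * y ^ (n + 1) * (d ^ n * d ^ n.choose 2) *
            (e ^ n.choose 2 * e ^ n.choose 3) *
            (f ^ (n + n.choose 2) * (f ^ n.choose 2 * f ^ (n.choose 2 + 2 * n.choose 3))) := by
          rw [pow_mul_mul_self_of_mul_eq hd hdy (hf d).symm (hf y), pow_succ x]
          simp only [mul_assoc, (hf' _ (d ^ _)).left_comm, (hf' _ (e ^ _)).left_comm]
      _ = x ^ (n + 1) * y ^ (n + 1) * d ^ (n + 1).choose 2 * e ^ (n + 1).choose 3 *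
            f ^ ((n + 1).choose 2 + 2 * (n + 1).choose 3) := by
          rw [← pow_add, ← pow_add, ← pow_add, ← pow_add, Nat.choose_succ_succ' n 2,
            Nat.choose_succ_succ' n 1, Nat.choose_one_right]
          ring_nf

end Collection

section PrimePower

variable {p : ℕ} [hp : Fact p.Prime] {G : Type*} [Group G]

theorem pow_choose_eq_one_of_pow_prime_eq_one {M : Type*} [Monoid M] {d : M} (hd : d ^ p = 1)
    {k : ℕ} (hk : k ≠ 0) (hkp : k < p) : d ^ p.choose k = 1 := by
  obtain ⟨m, hm⟩ := hp.out.dvd_choose_self hk hkp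
  rw [hm, pow_mul, hd, one_pow]

theorem exists_mem_mul_eq_mul_mul_of_commute_mk {E : Subgroup G} [E.Normal] {x y : G}
    (h : Commute (x : G ⧸ E) y) : ∃ d ∈ E, y * x = x * y * d :=
  ⟨(x * y)⁻¹ * (y * x), QuotientGroup.eq.mp h, (mul_inv_cancel_left _ _).symm⟩

theorem mul_pow_prime_of_le_center (hp2 : 2 < p) {E : Subgroup G} [E.Normal]
    (hE : E ≤ Subgroup.center G) (hEp : ∀ e ∈ E, e ^ p = 1) {x y : G}
    (hxy : Commute (x : G ⧸ E) y) : (x * y) ^ p = x ^ p * y ^ p := by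
  obtain ⟨d, hdE, hd⟩ := exists_mem_mul_eq_mul_mul_of_commute_mk hxy
  have hcomm (g : G) : Commute d g := (Subgroup.mem_center_iff.mp (hE hdE) g).symm
  rw [mul_pow_of_commute_of_commute hd (hcomm x) (hcomm y),
    pow_choose_eq_one_of_pow_prime_eq_one (hEp d hdE) two_ne_zero hp2, mul_one]

theorem exists_mem_inf_center_mul_eq {E : Subgroup G} [E.Normal]
    (hE : E ≤ Subgroup.upperCentralSeries G 2) {d : G} (hd : d ∈ E) (g : G) :
    ∃ e ∈ E ⊓ Subgroup.center G, d * g = g * d * e := by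
  refine ⟨d⁻¹ * g⁻¹ * d * g, Subgroup.mem_inf.mpr ⟨?_, ?_⟩, by group⟩
  · simpa only [mul_assoc, inv_inv] using
      E.mul_mem (E.inv_mem hd) (Subgroup.Normal.conj_mem ‹_› d hd g⁻¹)
  · rw [← Subgroup.upperCentralSeries_one]
    simpa only [inv_inv, commutatorElement_def] using
      Subgroup.mem_upperCentralSeries_succ_iff.mp (inv_mem (hE hd)) g⁻¹

theorem mul_pow_prime_of_le_upperCentralSeries_two (hp3 : 3 < p) {E : Subgroup G} [E.Normal]
    (hE : E ≤ Subgroup.upperCentralSeries G 2) (hEp : ∀ e ∈ E, e ^ p = 1) {x y : G}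
    (hxy : Commute (x : G ⧸ E) y) : (x * y) ^ p = x ^ p * y ^ p := by
  obtain ⟨d, hdE, hd⟩ := exists_mem_mul_eq_mul_mul_of_commute_mk hxy
  obtain ⟨e, ⟨heE, heZ⟩, hdx⟩ := exists_mem_inf_center_mul_eq hE hdE x
  obtain ⟨f, ⟨hfE, hfZ⟩, hdy⟩ := exists_mem_inf_center_mul_eq hE hdE y
  have choose_two {g : G} (hg : g ∈ E) : g ^ p.choose 2 = 1 :=
    pow_choose_eq_one_of_pow_prime_eq_one (hEp g hg) two_ne_zero (by lia)
  have choose_three {g : G} (hg : g ∈ E) : g ^ p.choose 3 = 1 :=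
    pow_choose_eq_one_of_pow_prime_eq_one (hEp g hg) three_ne_zero hp3
  rw [mul_pow_of_forall_commute hd hdx hdy (fun g => (Subgroup.mem_center_iff.mp heZ g).symm)
      (fun g => (Subgroup.mem_center_iff.mp hfZ g).symm),
    pow_add, mul_comm 2, pow_mul, choose_two hdE, choose_two hfE, choose_three heE,
    choose_three hfE, one_pow]
  simp only [mul_one]

end PrimePower

section PGroup

variable {p : ℕ} [hp : Fact p.Prime] {G : Type*} [Group G]

theorem normal_of_le_center {H : Subgroup G} (hH : H ≤ Subgroup.center G) : H.Normal :=
  ⟨fun h hh g => by rwa [Subgroup.mem_center_iff.mp (hH hh) g, mul_inv_cancel_right]⟩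

theorem pow_card_eq_one_of_mem {H : Subgroup G} {x : G} (hx : x ∈ H) : x ^ Nat.card H = 1 :=
  congrArg Subtype.val (pow_card_eq_one' (x := (⟨x, hx⟩ : H)))

theorem card_comap_mk' (N : Subgroup G) [N.Normal] (H : Subgroup (G ⧸ N)) :
    Nat.card (H.comap (QuotientGroup.mk' N)) = Nat.card N * Nat.card H := by
  rw [← Nat.card_prod]
  exact Nat.card_congr (QuotientGroup.preimageMkEquivSubgroupProdSet N (H : Set (G ⧸ N)))

theorem card_quotient_lt_card [Finite G] {N : Subgroup G} (hN : N ≠ ⊥) :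
    Nat.card (G ⧸ N) < Nat.card G := by
  rw [N.card_eq_card_quotient_mul_card_subgroup]
  exact lt_mul_of_one_lt_right Nat.card_pos ((Subgroup.one_lt_card_iff_ne_bot N).mpr hN)

theorem exists_subgroup_mem_iff_pow_eq_one {H Z : Subgroup G} {n : ℕ}
    (hmul : ∀ x ∈ H, ∀ y ∈ H, (x * y) ^ n = x ^ n * y ^ n) (hZ : ∀ x ∈ H, x ^ n ∈ Z) :
    ∃ K : Subgroup G, (∀ x, x ∈ K ↔ x ∈ H ∧ x ^ n = 1) ∧
      Nat.card H ∣ Nat.card Z * Nat.card K := by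
  let f : H →* Z := MonoidHom.mk' (fun x => ⟨(x : G) ^ n, hZ x x.2⟩)
    fun x y => Subtype.ext (hmul x x.2 y y.2)
  refine ⟨f.ker.map H.subtype, fun x => ?_, ?_⟩
  · simp [f, MonoidHom.mem_ker, Subtype.ext_iff, and_comm]
  · rw [Subgroup.card_map_of_injective H.subtype_injective, ← f.ker.card_mul_index,
      Subgroup.index_ker, mul_comm]
    exact mul_dvd_mul_right (Subgroup.card_subgroup_dvd_card _) _

section Finite

variable [Finite G]

theorem pow_succ_dvd_card_of_pow_lt_card (hG : IsPGroup p G) {n : ℕ} {K : Subgroup G}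
    (hK : p ^ n < Nat.card K) : p ^ (n + 1) ∣ Nat.card K := by
  obtain ⟨m, hm⟩ := (hG.to_subgroup K).exists_card_eq
  rw [hm] at hK ⊢
  exact pow_dvd_pow p ((Nat.pow_lt_pow_iff_right hp.out.one_lt).mp hK)

-- The fixed points of `G` acting on `K` by conjugation are the elements of `K ⊓ center G`.
theorem inf_center_ne_bot (hG : IsPGroup p G) {K : Subgroup G} [K.Normal] (hK : K ≠ ⊥) :
    K ⊓ Subgroup.center G ≠ ⊥ := by
  have hdvd : p ∣ Nat.card K :=
    (hG.to_subgroup K).card_eq_or_dvd.resolve_left fun h => hK (Subgroup.card_eq_one.mp h)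
  obtain ⟨z, hz, hz1⟩ := (hG.of_equiv ConjAct.toConjAct)
    |>.exists_fixed_point_of_prime_dvd_card_of_fixed_point K hdvd (a := 1) fun g => smul_one g
  have hzc : (z : G) ∈ Subgroup.center G := Subgroup.mem_center_iff.mpr fun g => by
    have h := congrArg Subtype.val (hz (ConjAct.toConjAct g))
    rw [ConjAct.Subgroup.val_conj_smul, ConjAct.toConjAct_smul] at h
    exact mul_inv_eq_iff_eq_mul.mp h
  exact fun h => hz1 (Subtype.ext ((Subgroup.eq_bot_iff_forall _).mp h z ⟨z.2, hzc⟩).symm)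

theorem exists_mem_center_orderOf_eq_prime (hG : IsPGroup p G) {K : Subgroup G} [K.Normal]
    (hK : K ≠ ⊥) : ∃ z ∈ K, z ∈ Subgroup.center G ∧ orderOf z = p := by
  have hdvd : p ∣ Nat.card (K ⊓ Subgroup.center G : Subgroup G) :=
    (hG.to_subgroup _).card_eq_or_dvd.resolve_left fun h =>
      inf_center_ne_bot hG hK (Subgroup.card_eq_one.mp h)
  obtain ⟨z, hz⟩ := exists_prime_orderOf_dvd_card' p hdvd
  exact ⟨z, z.2.1, z.2.2, by rw [Subgroup.orderOf_coe, hz]⟩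

theorem exists_normal_le_card_eq_prime_pow (hG : IsPGroup p G) {K : Subgroup G} [K.Normal] {n : ℕ}
    (hK : p ^ n ∣ Nat.card K) : ∃ N : Subgroup G, N.Normal ∧ N ≤ K ∧ Nat.card N = p ^ n := by
  induction n with
  | zero => exact ⟨⊥, inferInstance, bot_le, by simp⟩
  | succ n ih =>
    obtain ⟨N, hN, hNK, hNcard⟩ := ih ((pow_dvd_pow p n.le_succ).trans hK)
    have : (K.map (QuotientGroup.mk' N)).Normal :=
      ‹K.Normal›.map _ (QuotientGroup.mk'_surjective N)
    have hne : K.map (QuotientGroup.mk' N) ≠ ⊥ := by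
      rw [Ne, Subgroup.map_eq_bot_iff, QuotientGroup.ker_mk']
      intro hKN
      have := (hK.trans (Subgroup.card_dvd_of_le hKN)).trans hNcard.dvd
      exact absurd ((Nat.pow_dvd_pow_iff_le_right hp.out.one_lt).mp this) (by lia)
    obtain ⟨z, hzK, hzc, hz⟩ := exists_mem_center_orderOf_eq_prime (hG.to_quotient N) hne
    have : (Subgroup.zpowers z).Normal := normal_of_le_center (Subgroup.zpowers_le.mpr hzc)
    refine ⟨(Subgroup.zpowers z).comap (QuotientGroup.mk' N), inferInstance, ?_, ?_⟩
    · calc (Subgroup.zpowers z).comap (QuotientGroup.mk' N)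
          ≤ (K.map (QuotientGroup.mk' N)).comap (QuotientGroup.mk' N) :=
            Subgroup.comap_mono (Subgroup.zpowers_le.mpr hzK)
        _ = K := by rw [QuotientGroup.comap_map_mk', sup_eq_right.mpr hNK]
    · rw [card_comap_mk', Nat.card_zpowers, hz, hNcard, pow_succ]

theorem le_upperCentralSeries_of_card_dvd {k : ℕ} (hG : IsPGroup p G) {N : Subgroup G} [N.Normal]
    (hN : Nat.card N ∣ p ^ k) : N ≤ Subgroup.upperCentralSeries G k := by
  induction k generalizing G with
  | zero => simpa using (Subgroup.card_eq_one.mp (Nat.dvd_one.mp (by simpa using hN))).le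
  | succ k ih =>
    rcases eq_or_ne N ⊥ with rfl | hne
    · exact bot_le
    let π := QuotientGroup.mk' (Subgroup.center G)
    have : (N.map π).Normal := ‹N.Normal›.map _ (QuotientGroup.mk'_surjective _)
    have hcard : Nat.card (Subgroup.center G ⊓ N : Subgroup G) * Nat.card (N.map π) =
        Nat.card N := by
      rw [← Subgroup.relIndex_ker, QuotientGroup.ker_mk', ← Subgroup.relIndex_bot_left,
        Subgroup.relIndex_inf_mul_relIndex, bot_inf_eq, Subgroup.relIndex_bot_left]
    have hp_dvd : p ∣ Nat.card (Subgroup.center G ⊓ N : Subgroup G) :=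
      (hG.to_subgroup _).card_eq_or_dvd.resolve_left fun h =>
        inf_center_ne_bot hG hne (inf_comm _ N ▸ Subgroup.card_eq_one.mp h)
    have hmap : Nat.card (N.map π) ∣ p ^ k :=
      Nat.dvd_of_mul_dvd_mul_left hp.out.pos
        ((mul_dvd_mul_right hp_dvd _).trans (by rwa [hcard, ← pow_succ']))
    rw [← Subgroup.comap_upperCentralSeries_quotient_center]
    exact Subgroup.map_le_iff_le_comap.mp (ih (hG.to_quotient _) hmap)

theorem le_center_of_card_eq_prime (hG : IsPGroup p G) {N : Subgroup G} [N.Normal]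
    (hN : Nat.card N = p) : N ≤ Subgroup.center G := by
  rw [← Subgroup.upperCentralSeries_one]
  exact le_upperCentralSeries_of_card_dvd hG (by rw [hN, pow_one])

theorem exists_notMem_pow_prime_eq_one_of_isCyclic_quotient (hG : IsPGroup p G)
    (hcyc : ¬ IsCyclic G) {Z : Subgroup G} [Z.Normal] (hZ : Nat.card Z = p)
    (hQ : IsCyclic (G ⧸ Z)) : ∃ a ∉ Z, a ^ p = 1 := by
  obtain ⟨q, hq⟩ := hQ.exists_ofOrder_eq_natCard
  obtain ⟨a, rfl⟩ := QuotientGroup.mk_surjective q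
  have hcard : Nat.card G = Nat.card (G ⧸ Z) * p := by
    rw [Z.card_eq_card_quotient_mul_card_subgroup, hZ]
  obtain ⟨r, hr⟩ := (hG.to_quotient Z).exists_card_eq
  rw [hr] at hq hcard
  have mk_pow (k : ℕ) : a ^ k ∈ Z ↔ p ^ r ∣ k := by
    rw [← QuotientGroup.eq_one_iff, QuotientGroup.mk_pow, ← orderOf_dvd_iff_pow_eq_one, hq]
  have hap : (a ^ p ^ r) ^ p = 1 := by
    simpa only [hZ] using pow_card_eq_one_of_mem ((mk_pow _).mpr dvd_rfl)
  have ha : a ^ p ^ r = 1 := by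
    by_contra hne
    refine hcyc (isCyclic_of_orderOf_eq_card a ?_)
    rw [orderOf_eq_prime_pow hne (by rw [pow_succ, pow_mul, hap]), hcard, pow_succ]
  cases r with
  | zero => exact absurd (isCyclic_of_prime_card (by rw [hcard, pow_zero, one_mul])) hcyc
  | succ s =>
    refine ⟨a ^ p ^ s, fun h => ?_, by rw [← pow_mul, ← pow_succ, ha]⟩
    exact absurd ((Nat.pow_dvd_pow_iff_le_right hp.out.one_lt).mp ((mk_pow _).mp h)) (by lia)

theorem exists_normal_sq_dvd_card_of_isCyclic_quotient (hG : IsPGroup p G) (hcyc : ¬ IsCyclic G)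
    {Z : Subgroup G} [Z.Normal] (hZ : Nat.card Z = p) (hQ : IsCyclic (G ⧸ Z)) :
    ∃ K : Subgroup G, K.Normal ∧ p ^ 2 ∣ Nat.card K ∧ ∀ x ∈ K, x ^ p = 1 := by
  obtain ⟨a, haZ, ha⟩ := exists_notMem_pow_prime_eq_one_of_isCyclic_quotient hG hcyc hZ hQ
  have : IsMulCommutative G := MonoidHom.isMulCommutative_of_isCyclic_of_ker_le_center
    (QuotientGroup.mk' Z) (by simpa using le_center_of_card_eq_prime hG hZ)
  have hcomm (x y : G) : Commute x y := this.is_comm.comm x y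
  obtain ⟨K, hK, -⟩ := exists_subgroup_mem_iff_pow_eq_one (H := ⊤) (Z := ⊤) (n := p)
    (fun x _ y _ => (hcomm x y).mul_pow p) fun _ _ => Subgroup.mem_top _
  have hZK : Z < K := lt_of_le_of_ne
    (fun x hx => (hK x).mpr ⟨Subgroup.mem_top x, hZ ▸ pow_card_eq_one_of_mem hx⟩)
    (fun h => haZ (h ▸ (hK a).mpr ⟨Subgroup.mem_top a, ha⟩))
  refine ⟨K, normal_of_le_center fun x _ => Subgroup.mem_center_iff.mpr fun g => hcomm g x, ?_,
    fun x hx => ((hK x).mp hx).2⟩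
  refine pow_succ_dvd_card_of_pow_lt_card hG ?_
  rw [pow_one, ← hZ]
  exact lt_of_not_ge fun h => hZK.ne (Subgroup.eq_of_le_of_card_ge hZK.le h)

theorem exists_normal_sq_dvd_card_of_quotient (hp2 : 2 < p) (hG : IsPGroup p G)
    {Z : Subgroup G} [Z.Normal] (hZ : Nat.card Z = p) {N : Subgroup (G ⧸ Z)} [N.Normal]
    (hN : Nat.card N = p ^ 2) (hNp : ∀ x ∈ N, x ^ p = 1) :
    ∃ K : Subgroup G, K.Normal ∧ p ^ 2 ∣ Nat.card K ∧ ∀ x ∈ K, x ^ p = 1 := by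
  have hNcomm : IsMulCommutative N := IsPGroup.isMulCommutative_of_card_eq_prime_sq hN
  obtain ⟨K, hK, hcard⟩ := exists_subgroup_mem_iff_pow_eq_one
    (H := N.comap (QuotientGroup.mk' Z)) (Z := Z) (n := p)
    (fun x hx y hy => mul_pow_prime_of_le_center hp2 (le_center_of_card_eq_prime hG hZ)
      (fun e he => hZ ▸ pow_card_eq_one_of_mem he)
      (congrArg Subtype.val (hNcomm.is_comm.comm ⟨_, hx⟩ ⟨_, hy⟩)))
    fun x hx => (QuotientGroup.eq_one_iff _).mp (hNp _ hx)
  refine ⟨K, ⟨fun x hx g => ?_⟩, ?_, fun x hx => ((hK x).mp hx).2⟩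
  · rw [hK] at hx ⊢
    refine ⟨Subgroup.Normal.conj_mem inferInstance x hx.1 g, ?_⟩
    rw [conj_pow, hx.2, mul_one, mul_inv_cancel]
  · rw [card_comap_mk', hZ, hN] at hcard
    exact Nat.dvd_of_mul_dvd_mul_left hp.out.pos hcard

theorem exists_normal_card_eq_sq_pow_prime_eq_one (hp2 : 2 < p) (hG : IsPGroup p G)
    (hcyc : ¬ IsCyclic G) :
    ∃ E : Subgroup G, E.Normal ∧ Nat.card E = p ^ 2 ∧ ∀ x ∈ E, x ^ p = 1 := by
  induction hn : Nat.card G using Nat.strong_induction_on generalizing G with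
  | _ n ih =>
  subst hn
  suffices ∃ K : Subgroup G, K.Normal ∧ p ^ 2 ∣ Nat.card K ∧ ∀ x ∈ K, x ^ p = 1 by
    obtain ⟨K, hKn, hKcard, hKp⟩ := this
    obtain ⟨E, hEn, hEK, hE⟩ := exists_normal_le_card_eq_prime_pow hG hKcard
    exact ⟨E, hEn, hE, fun x hx => hKp x (hEK hx)⟩
  have : Nontrivial G := Nontrivial.of_not_isCyclic hcyc
  obtain ⟨z, -, hzc, hz⟩ := exists_mem_center_orderOf_eq_prime hG (K := ⊤) top_ne_bot
  have : (Subgroup.zpowers z).Normal := normal_of_le_center (Subgroup.zpowers_le.mpr hzc)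
  have hZ : Nat.card (Subgroup.zpowers z) = p := by rw [Nat.card_zpowers, hz]
  by_cases hQ : IsCyclic (G ⧸ Subgroup.zpowers z)
  · exact exists_normal_sq_dvd_card_of_isCyclic_quotient hG hcyc hZ hQ
  · have hlt : Nat.card (G ⧸ Subgroup.zpowers z) < Nat.card G :=
      card_quotient_lt_card fun h => hp.out.one_lt.ne' (by rw [← hZ, h, Subgroup.card_bot])
    obtain ⟨N, hN, hNcard, hNp⟩ := ih _ hlt (hG.to_quotient _) hQ rfl
    exact exists_normal_sq_dvd_card_of_quotient hp2 hG hZ hNcard hNp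

end Finite

end PGroup

/-- A finite group is a Q-group if, for every divisor `m` of its exponent, at most `m ^ 2` of its
elements satisfy `x ^ m = 1`. Finiteness is assumed separately where it is needed. -/
def IsQGroup (G : Type*) [Group G] : Prop :=
  ∀ m : ℕ, m ∣ Monoid.exponent G → Nat.card {x : G // x ^ m = 1} ≤ m ^ 2

section QGroup

variable {G : Type*} [Group G]

theorem IsQGroup.card_le (hQ : IsQGroup G) {m : ℕ} (hm : m ≠ 0) :
    Nat.card {x : G // x ^ m = 1} ≤ m ^ 2 := by
  have hgcd (x : G) : x ^ m = 1 ↔ x ^ m.gcd (Monoid.exponent G) = 1 := by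
    rw [pow_gcd_eq_one, and_iff_left (Monoid.pow_exponent_eq_one x)]
  simp only [hgcd]
  exact (hQ _ (Nat.gcd_dvd_right _ _)).trans
    (Nat.pow_le_pow_left (Nat.gcd_le_left _ (Nat.pos_of_ne_zero hm)) 2)

variable [Finite G]

theorem IsQGroup.quotient (hQ : IsQGroup G) {n : ℕ} (hn : n ≠ 0) {E : Subgroup G} [E.Normal]
    (hE : ∀ x, x ∈ E ↔ x ^ n = 1) (hcard : Nat.card E = n ^ 2) : IsQGroup (G ⧸ E) := by
  intro m hm
  have hm0 : m ≠ 0 := ne_zero_of_dvd_ne_zero Monoid.exponent_ne_zero_of_finite hm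
  let T : Set (G ⧸ E) := {x | x ^ m = 1}
  have hpre : Nat.card ((↑) ⁻¹' T : Set G) = n ^ 2 * Nat.card T := by
    rw [← hcard, ← Nat.card_prod]
    exact Nat.card_congr (QuotientGroup.preimageMkEquivSubgroupProdSet E T)
  have hle : Nat.card ((↑) ⁻¹' T : Set G) ≤ (m * n) ^ 2 := by
    convert hQ.card_le (mul_ne_zero hm0 hn) using 4 with x
    rw [pow_mul, ← hE, ← QuotientGroup.eq_one_iff, QuotientGroup.mk_pow]
    rfl
  rw [hpre, mul_pow, mul_comm] at hle
  exact le_of_mul_le_mul_right hle (by positivity)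

variable {p : ℕ} [hp : Fact p.Prime]

theorem IsQGroup.exists_normal_mem_iff_pow_prime_eq_one (hQ : IsQGroup G) (hp2 : 2 < p)
    (hG : IsPGroup p G) (hcyc : ¬ IsCyclic G) :
    ∃ E : Subgroup G, E.Normal ∧ Nat.card E = p ^ 2 ∧ ∀ x, x ∈ E ↔ x ^ p = 1 := by
  obtain ⟨E, hEn, hE, hEp⟩ := exists_normal_card_eq_sq_pow_prime_eq_one hp2 hG hcyc
  have hEq : (E : Set G) = {x | x ^ p = 1} :=
    Set.eq_of_subset_of_ncard_le hEp ((hQ.card_le hp.out.ne_zero).trans hE.ge)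
  exact ⟨E, hEn, hE, fun x => Set.ext_iff.mp hEq x⟩

theorem IsQGroup.commute_of_pow_prime_eq_one (hQ : IsQGroup G) (hp2 : 2 < p) (hG : IsPGroup p G)
    {x y : G} (hx : x ^ p = 1) (hy : y ^ p = 1) : Commute x y := by
  by_cases hcyc : IsCyclic G
  · exact IsCyclic.isMulCommutative.is_comm.comm x y
  · obtain ⟨E, -, hE, hEp⟩ := hQ.exists_normal_mem_iff_pow_prime_eq_one hp2 hG hcyc
    have : IsMulCommutative E := IsPGroup.isMulCommutative_of_card_eq_prime_sq hE
    exact congrArg Subtype.val (this.is_comm.comm ⟨x, (hEp x).mpr hx⟩ ⟨y, (hEp y).mpr hy⟩)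

end QGroup

section Lift

variable {G : Type*} [Group G] {E : Subgroup G} [E.Normal]

theorem orderOf_mk_eq_orderOf_pow {n : ℕ} (hE : ∀ x, x ∈ E ↔ x ^ n = 1) (a : G) :
    orderOf (a : G ⧸ E) = orderOf (a ^ n) := by
  refine orderOf_eq_orderOf_iff.mpr fun k => ?_
  rw [← QuotientGroup.mk_pow, QuotientGroup.eq_one_iff, hE, pow_right_comm]

variable {p : ℕ} [hp : Fact p.Prime]

theorem orderOf_eq_mul_orderOf_mk (hG : IsPGroup p G) (hE : ∀ x, x ∈ E ↔ x ^ p = 1) {a : G}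
    (ha : a ≠ 1) : orderOf a = p * orderOf (a : G ⧸ E) := by
  have hdvd : p ∣ orderOf a := hG.dvd_orderOf ha
  rw [orderOf_mk_eq_orderOf_pow hE, orderOf_pow_of_dvd hp.out.ne_zero hdvd,
    Nat.mul_div_cancel' hdvd]

theorem exists_mem_zpowers_pow_prime_eq (hG : IsPGroup p G) {a x : G} (ha : a ^ p ≠ 1)
    (hxa : x ∈ Subgroup.zpowers a) (hx : x ^ p = 1) : ∃ u ∈ Subgroup.zpowers a, u ^ p = x := by
  obtain ⟨i, rfl⟩ := hxa
  have hdvd : (p * p : ℤ) ∣ i * p := by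
    have hp_dvd : p ∣ orderOf a := hG.dvd_orderOf fun h => ha (by rw [h, one_pow])
    have hsq_dvd : p * p ∣ orderOf a := by
      rw [← Nat.dvd_div_iff_mul_dvd hp_dvd, ← orderOf_pow_of_dvd hp.out.ne_zero hp_dvd]
      exact hG.dvd_orderOf ha
    have hdvd_mul : (orderOf a : ℤ) ∣ i * p := by
      rw [orderOf_dvd_iff_zpow_eq_one, zpow_mul, zpow_natCast]
      exact hx
    exact_mod_cast (Int.natCast_dvd_natCast.mpr hsq_dvd).trans hdvd_mul
  obtain ⟨k, rfl⟩ := Int.dvd_of_mul_dvd_mul_right (by exact_mod_cast hp.out.ne_zero) hdvd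
  exact ⟨a ^ k, zpow_mem (Subgroup.mem_zpowers a) k, by rw [← zpow_natCast, ← zpow_mul, mul_comm]⟩

end Lift

section Factorization

open Subgroup (zpowers IsComplement')

variable {G : Type*} [Group G]

theorem disjoint_of_prime_card_of_not_le {H K : Subgroup G} (hK : (Nat.card K).Prime)
    (hKH : ¬ K ≤ H) : Disjoint H K := by
  have : Fact (Nat.card K).Prime := ⟨hK⟩
  rw [← Subgroup.subgroupOf_eq_bot]
  exact (H.subgroupOf K).eq_bot_or_eq_top_of_prime_card.resolve_right
    (mt Subgroup.subgroupOf_eq_top.mp hKH)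

theorem ne_one_of_isComplement'_zpowers (hcyc : ¬ IsCyclic G) {a b : G}
    (hab : IsComplement' (zpowers a) (zpowers b)) : b ≠ 1 := by
  rintro rfl
  rw [Subgroup.zpowers_one_eq_bot, Subgroup.isComplement'_bot_right] at hab
  exact hcyc (isCyclic_iff_exists_zpowers_eq_top.mpr ⟨a, hab⟩)

variable {p : ℕ} [hp : Fact p.Prime] {E : Subgroup G} [E.Normal]

theorem eq_one_of_mem_zpowers_of_disjoint_mk (hG : IsPGroup p G)
    (hE : ∀ x, x ∈ E ↔ x ^ p = 1)
    (hcomm : ∀ u v : G ⧸ E, u ^ p = 1 → v ^ p = 1 → Commute u v)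
    (hmul : ∀ x y : G, Commute (x : G ⧸ E) y → (x * y) ^ p = x ^ p * y ^ p) {a b : G}
    (ha : (a : G ⧸ E) ≠ 1) (hb : (b : G ⧸ E) ≠ 1)
    (hab : Disjoint (zpowers (a : G ⧸ E)) (zpowers (b : G ⧸ E))) {x : G}
    (hxa : x ∈ zpowers a) (hxb : x ∈ zpowers b) (hx : x ^ p = 1) : x = 1 := by
  have pow_ne {c : G} (hc : (c : G ⧸ E) ≠ 1) : c ^ p ≠ 1 :=
    mt (hE c).mpr (mt (QuotientGroup.eq_one_iff c).mpr hc)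
  obtain ⟨u, hua, rfl⟩ := exists_mem_zpowers_pow_prime_eq hG (pow_ne ha) hxa hx
  obtain ⟨v, hvb, hvu⟩ := exists_mem_zpowers_pow_prime_eq hG (pow_ne hb) hxb hx
  have mk_pow {w : G} (hw : (w ^ p) ^ p = 1) : (w : G ⧸ E) ^ p = 1 := by
    rwa [← QuotientGroup.mk_pow, QuotientGroup.eq_one_iff, hE]
  have huv : Commute (v⁻¹ : G ⧸ E) u := (hcomm _ _ (mk_pow (hvu ▸ hx)) (mk_pow hx)).inv_left
  have hmk : (v : G ⧸ E) = u :=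
    QuotientGroup.eq.mpr ((hE _).mpr (by rw [hmul _ _ huv, inv_pow, hvu, inv_mul_cancel]))
  have hmem {c w : G} (hw : w ∈ zpowers c) : (w : G ⧸ E) ∈ zpowers (c : G ⧸ E) :=
    (MonoidHom.map_zpowers (QuotientGroup.mk' E) c).le (Subgroup.mem_map_of_mem _ hw)
  exact (hE u).mp ((QuotientGroup.eq_one_iff u).mp
    (Subgroup.disjoint_def.mp hab (hmem hua) (hmk ▸ hmem hvb)))

variable [Finite G]

theorem disjoint_of_forall_pow_prime_eq_one (hG : IsPGroup p G) {H K : Subgroup G}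
    (h : ∀ x ∈ H, x ∈ K → x ^ p = 1 → x = 1) : Disjoint H K := by
  rw [disjoint_iff]
  by_contra hne
  have hdvd : p ∣ Nat.card (H ⊓ K : Subgroup G) :=
    (hG.to_subgroup _).card_eq_or_dvd.resolve_left (mt Subgroup.card_eq_one.mp hne)
  obtain ⟨x, hx⟩ := exists_prime_orderOf_dvd_card' p hdvd
  have hx1 : x = 1 := Subtype.ext (h x x.2.1 x.2.2 (by
    rw [← Subgroup.coe_pow, ← hx, pow_orderOf_eq_one, Subgroup.coe_one]))
  exact hp.out.one_lt.ne' (by rw [← hx, hx1, orderOf_one])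

theorem isComplement'_zpowers_of_mk (hG : IsPGroup p G)
    (hE : ∀ x, x ∈ E ↔ x ^ p = 1) (hcard : Nat.card E = p ^ 2)
    (hcomm : ∀ u v : G ⧸ E, u ^ p = 1 → v ^ p = 1 → Commute u v)
    (hmul : ∀ x y : G, Commute (x : G ⧸ E) y → (x * y) ^ p = x ^ p * y ^ p) {a b : G}
    (ha : (a : G ⧸ E) ≠ 1) (hb : (b : G ⧸ E) ≠ 1)
    (hab : IsComplement' (zpowers (a : G ⧸ E)) (zpowers (b : G ⧸ E))) :
    IsComplement' (zpowers a) (zpowers b) := by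
  have ne_one {c : G} (hc : (c : G ⧸ E) ≠ 1) : c ≠ 1 := by
    rintro rfl
    exact hc rfl
  refine Subgroup.isComplement'_of_card_mul_and_disjoint ?_
    (disjoint_of_forall_pow_prime_eq_one hG fun x =>
      eq_one_of_mem_zpowers_of_disjoint_mk hG hE hcomm hmul ha hb hab.disjoint)
  rw [E.card_eq_card_quotient_mul_card_subgroup, ← hab.card_mul_card, hcard]
  simp only [Nat.card_zpowers]
  rw [orderOf_eq_mul_orderOf_mk hG hE (ne_one ha), orderOf_eq_mul_orderOf_mk hG hE (ne_one hb)]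
  ring

theorem exists_isComplement'_zpowers_of_isCyclic_quotient (hG : IsPGroup p G)
    (hE : ∀ x, x ∈ E ↔ x ^ p = 1) (hcard : Nat.card E = p ^ 2) (hQ : IsCyclic (G ⧸ E)) :
    ∃ a b : G, IsComplement' (zpowers a) (zpowers b) := by
  have hEcyc : ¬ IsCyclic E := fun h => by
    obtain ⟨e, he⟩ := h.exists_ofOrder_eq_natCard
    have hdvd : orderOf e ∣ p := orderOf_dvd_of_pow_eq_one (Subtype.ext ((hE e).mp e.2))
    rw [he, hcard] at hdvd
    exact (Nat.le_of_dvd hp.out.pos hdvd).not_gt (lt_self_pow₀ hp.out.one_lt one_lt_two)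
  obtain ⟨a, ha1, ha⟩ : ∃ a : G, a ≠ 1 ∧ orderOf (a : G ⧸ E) = Nat.card (G ⧸ E) := by
    obtain ⟨q, hq⟩ := hQ.exists_ofOrder_eq_natCard
    obtain ⟨a, rfl⟩ := QuotientGroup.mk_surjective q
    rcases ne_or_eq a 1 with ha1 | rfl
    · exact ⟨a, ha1, hq⟩
    · have : Nontrivial E := Nontrivial.of_not_isCyclic hEcyc
      obtain ⟨e, he⟩ := exists_ne (1 : E)
      refine ⟨e, fun h => he (Subtype.ext h), ?_⟩
      rw [(QuotientGroup.eq_one_iff _).mpr e.2, ← hq, QuotientGroup.mk_one]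
  obtain ⟨b, hbE, hba⟩ : ∃ b ∈ E, b ∉ zpowers a := by
    by_contra! hle
    exact hEcyc (Subgroup.isCyclic_of_le hle)
  have hb : orderOf b = p :=
    orderOf_eq_prime ((hE b).mp hbE) fun h => hba (h ▸ one_mem _)
  refine ⟨a, b, Subgroup.isComplement'_of_card_mul_and_disjoint ?_
    (disjoint_of_prime_card_of_not_le (by rw [Nat.card_zpowers, hb]; exact hp.out)
      (mt Subgroup.zpowers_le.mp hba))⟩
  rw [Nat.card_zpowers, Nat.card_zpowers, orderOf_eq_mul_orderOf_mk hG hE ha1, ha, hb,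
    E.card_eq_card_quotient_mul_card_subgroup, hcard]
  ring

theorem IsQGroup.exists_isComplement'_zpowers (hp3 : 3 < p) (hG : IsPGroup p G)
    (hQ : IsQGroup G) : ∃ a b : G, IsComplement' (zpowers a) (zpowers b) := by
  induction hn : Nat.card G using Nat.strong_induction_on generalizing G with
  | _ n ih =>
  subst hn
  by_cases hcyc : IsCyclic G
  · obtain ⟨a, ha⟩ := isCyclic_iff_exists_zpowers_eq_top.mp hcyc
    refine ⟨a, 1, ?_⟩
    rw [Subgroup.zpowers_one_eq_bot, ha]
    exact Subgroup.isComplement'_top_bot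
  obtain ⟨E, hEn, hcard, hE⟩ :=
    hQ.exists_normal_mem_iff_pow_prime_eq_one (by lia) hG hcyc
  by_cases hcycE : IsCyclic (G ⧸ E)
  · exact exists_isComplement'_zpowers_of_isCyclic_quotient hG hE hcard hcycE
  have hQE : IsQGroup (G ⧸ E) := hQ.quotient hp.out.ne_zero hE hcard
  have hE2 : E ≤ Subgroup.upperCentralSeries G 2 :=
    le_upperCentralSeries_of_card_dvd hG hcard.dvd
  have hlt : Nat.card (G ⧸ E) < Nat.card G := card_quotient_lt_card fun h => by
    rw [h, Subgroup.card_bot] at hcard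
    exact (Nat.one_lt_pow two_ne_zero hp.out.one_lt).ne hcard
  obtain ⟨q, r, hqr⟩ := ih _ hlt (hG.to_quotient E) hQE rfl
  obtain ⟨a, rfl⟩ := QuotientGroup.mk_surjective q
  obtain ⟨b, rfl⟩ := QuotientGroup.mk_surjective r
  exact ⟨a, b, isComplement'_zpowers_of_mk hG hE hcard
    (fun u v => hQE.commute_of_pow_prime_eq_one (by lia) (hG.to_quotient E))
    (fun x y => mul_pow_prime_of_le_upperCentralSeries_two hp3 hE2 fun e => (hE e).mp)
    (ne_one_of_isComplement'_zpowers hcycE hqr.symm) (ne_one_of_isComplement'_zpowers hcycE hqr)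
    hqr⟩

end Factorization

theorem Q_pgroup_product_of_two_cyclic (p : ℕ) (hp : p.Prime) (hp3 : 3 < p)
    (G : Type*) [Group G] [Finite G] (hpG : IsPGroup p G)
    (h : ∀ m : ℕ, m ∣ Monoid.exponent G → Nat.card {x : G // x ^ m = 1} ≤ m ^ 2) :
    ∃ A B : Subgroup G, IsCyclic A ∧ IsCyclic B ∧ A ⊓ B = ⊥ ∧
      ∀ g : G, ∃ a ∈ A, ∃ b ∈ B, g = a * b := by
  have : Fact p.Prime := ⟨hp⟩
  have hQ : IsQGroup G := h
  obtain ⟨a, b, hab⟩ := hQ.exists_isComplement'_zpowers hp3 hpG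
  refine ⟨Subgroup.zpowers a, Subgroup.zpowers b, inferInstance, inferInstance,
    hab.disjoint.eq_bot, fun g => ?_⟩
  obtain ⟨⟨x, y⟩, hxy⟩ := hab.surjective g
  exact ⟨x, x.2, y, y.2, hxy.symm⟩
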